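/- For the normalized Lobachevsky splines f_n*(x) = a√(n/3) f_n(a√(n/3) x), the cumulative distribution functions converge: for every x ∈ ℝ, lim_{n→∞} ∫_{−∞}^{x} f_n*(t) dt = ∫_{−∞}^{x} (1/√(2π)) exp(−t²/2) dt. -/

import Mathlib

open MeasureTheory Filter

noncomputable def lob (a : ℝ) : ℕ → ℝ → ℝ
  | 0 => fun _ => 0
  | 1 => fun x => if |x| ≤ a then 1 / (2 * a) else 0
  | (n + 2) => fun x => (1 / (2 * a)) * ∫ t in (x - a)..(x + a), lob a (n + 1) t

/-- Normalized Lobachevsky spline `f_n*(x) = a√(n/3) f_n(a√(n/3) x)`. -/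
noncomputable def lobStar (a : ℝ) (n : ℕ) (x : ℝ) : ℝ :=
  a * Real.sqrt (n / 3) * lob a n (a * Real.sqrt (n / 3) * x)

/-- Standard normal density. -/
noncomputable def stdNormal (x : ℝ) : ℝ :=
  (1 / Real.sqrt (2 * Real.pi)) * Real.exp (-x ^ 2 / 2)

/-!
If `X₁, X₂, …` are independent and uniform on `[-a, a]`, then `X₁ + ⋯ + Xₙ` has the `n`-fold
convolution `lob a n` as density, mean `0` and variance `n a² / 3`. Since `a √(n / 3)` is the
standard deviation of this sum, `lobStar a n` is the density of the standardized sum. The central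
limit theorem gives convergence in distribution, hence convergence of the cumulative distribution
functions at every point, because the normal law has no atoms.
-/

open ProbabilityTheory

open scoped Topology Convolution Pointwise

theorem tendsto_measureReal_le_of_tendstoInDistribution {ι E Ω' : Type*} {Ω : ι → Type*}
    [LinearOrder E] [TopologicalSpace E] [OrderClosedTopology E] [HasOuterApproxClosed E]
    [MeasurableSpace E] [OpensMeasurableSpace E]
    {mΩ : ∀ i, MeasurableSpace (Ω i)} {μ : ∀ i, Measure (Ω i)} [∀ i, IsProbabilityMeasure (μ i)]
    {mΩ' : MeasurableSpace Ω'} {μ' : Measure Ω'} [IsProbabilityMeasure μ']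
    {X : ∀ i, Ω i → E} {Z : Ω' → E} {l : Filter ι}
    (h : TendstoInDistribution X l Z μ μ') {x : E} (hx : μ'.map Z {x} = 0) :
    Tendsto (fun i ↦ (μ i).real {ω | X i ω ≤ x}) l (𝓝 (μ'.real {ω | Z ω ≤ x})) := by
  have hfrontier : μ'.map Z (frontier (Set.Iic x)) = 0 :=
    measure_mono_null (frontier_Iic_subset x) hx
  have htendsto := (ENNReal.tendsto_toReal (measure_ne_top (μ'.map Z) _)).comp
    (ProbabilityMeasure.tendsto_measure_of_null_frontier_of_tendsto' h.tendsto hfrontier)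
  convert htendsto using 1
  · ext i
    exact (map_measureReal_apply_of_aemeasurable (h.forall_aemeasurable i) measurableSet_Iic).symm
  · exact congrArg 𝓝
      (map_measureReal_apply_of_aemeasurable h.aemeasurable_limit measurableSet_Iic).symm

theorem gaussianPDFReal_zero_one : gaussianPDFReal 0 1 = stdNormal := by
  ext x
  simp [stdNormal, gaussianPDFReal]

theorem measureReal_gaussianReal_zero_one (s : Set ℝ) :
    (gaussianReal 0 1).real s = ∫ t in s, stdNormal t := by
  rw [measureReal_def, gaussianReal_apply_eq_integral 0 one_ne_zero, gaussianPDFReal_zero_one,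
    ENNReal.toReal_ofReal]
  exact integral_nonneg fun t ↦ gaussianPDFReal_zero_one ▸ gaussianPDFReal_nonneg 0 1 t

theorem tendsto_measureReal_sum_range_le_of_iIndepFun {Ω : Type*} {mΩ : MeasurableSpace Ω}
    {P : Measure Ω} [IsProbabilityMeasure P] {X : ℕ → Ω → ℝ}
    (hindep : iIndepFun X P) (hident : ∀ i, IdentDistrib (X i) (X 0) P P)
    (hvar : Var[X 0; P] ≠ 0) (x : ℝ) :
    Tendsto (fun n : ℕ ↦ P.real {ω | ∑ k ∈ Finset.range n, X k ω - n * P[X 0] ≤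
      √(n * Var[X 0; P]) * x}) atTop (𝓝 (∫ t in Set.Iic x, stdNormal t)) := by
  set v := Var[X 0; P]
  have hv : 0 < √v := Real.sqrt_pos.2 (lt_of_le_of_ne (variance_nonneg _ _) hvar.symm)
  have hlaw : HasLaw (fun y ↦ √v * y) (gaussianReal 0 v.toNNReal) (gaussianReal 0 1) := by
    convert! gaussianReal_const_mul HasLaw.id (√v) using 2
    · simp
    · ext
      simp [Real.sq_sqrt, variance_nonneg, v]
  have hatom : (gaussianReal 0 1).map (fun y ↦ √v * y) {√v * x} = 0 := by
    have := nullSingletonClass_gaussianReal (μ := 0) (v := v.toNNReal)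
      (by simpa using Real.sqrt_pos.1 hv)
    rw [hlaw.map_eq, measure_singleton]
  have hmem : MemLp (X 0) 2 P :=
    memLp_two_of_variance_ne_zero (hident 0).aemeasurable_fst.aestronglyMeasurable hvar
  have hclt := tendsto_measureReal_le_of_tendstoInDistribution
    (tendstoInDistribution_inv_sqrt_mul_sum_sub hlaw hmem hindep hident) hatom
  have hlimit : {y | √v * y ≤ √v * x} = Set.Iic x := by
    ext y
    exact mul_le_mul_iff_right₀ hv
  rw [hlimit, measureReal_gaussianReal_zero_one] at hclt
  refine hclt.congr' ?_
  filter_upwards [eventually_gt_atTop 0] with n hn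
  simp_rw [inv_mul_le_iff₀ (Real.sqrt_pos.2 (Nat.cast_pos.2 hn : (0 : ℝ) < n)),
    Real.sqrt_mul n.cast_nonneg, mul_assoc]

section UniformDistribution

variable {a b : ℝ}

theorem integral_cond_Icc {E : Type*} [NormedAddCommGroup E] [NormedSpace ℝ E] (hab : a ≤ b)
    (f : ℝ → E) :
    ∫ x, f x ∂volume[|Set.Icc a b] = (b - a)⁻¹ • ∫ x in a..b, f x := by
  rw [ProbabilityTheory.cond, integral_smul_measure, intervalIntegral.integral_of_le hab,
    integral_Icc_eq_integral_Ioc, Real.volume_Icc, ENNReal.toReal_inv,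
    ENNReal.toReal_ofReal (sub_nonneg.2 hab)]

theorem integral_id_cond_Icc (hab : a < b) : ∫ x, x ∂volume[|Set.Icc a b] = (a + b) / 2 := by
  rw [integral_cond_Icc hab.le, integral_id, smul_eq_mul]
  field [(sub_pos.2 hab).ne']

theorem variance_id_cond_Icc (hab : a < b) :
    Var[id; volume[|Set.Icc a b]] = (b - a) ^ 2 / 12 := by
  rw [variance_eq_integral aemeasurable_id]
  simp only [id_eq]
  rw [integral_id_cond_Icc hab, integral_cond_Icc hab.le,
    intervalIntegral.integral_comp_sub_right (fun x ↦ x ^ 2), integral_pow, smul_eq_mul]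
  field [(sub_pos.2 hab).ne']

end UniformDistribution

theorem measureReal_withDensity_ofReal {α : Type*} {mα : MeasurableSpace α} {μ : Measure α}
    {f : α → ℝ} (hf : AEStronglyMeasurable f μ) (hf0 : 0 ≤ f) {s : Set α}
    (hs : MeasurableSet s) :
    (μ.withDensity fun x ↦ ENNReal.ofReal (f x)).real s = ∫ x in s, f x ∂μ := by
  rw [measureReal_def, withDensity_apply _ hs,
    integral_eq_lintegral_of_nonneg_ae (ae_of_all _ hf0) hf.restrict]

theorem conv_withDensity_ofReal {G : Type*} [AddCommGroup G] [MeasurableSpace G]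
    [MeasurableAdd₂ G] [MeasurableNeg G] {μ : Measure G} [SFinite μ] [μ.IsAddLeftInvariant]
    {f g : G → ℝ} (hf : Integrable f μ) (hg : Integrable g μ) (hf0 : 0 ≤ f) (hg0 : 0 ≤ g) :
    (μ.withDensity fun x ↦ ENNReal.ofReal (f x)) ∗ (μ.withDensity fun x ↦ ENNReal.ofReal (g x)) =
      μ.withDensity fun x ↦ ENNReal.ofReal ((f ⋆[ContinuousLinearMap.lsmul ℝ ℝ, μ] g) x) := by
  rw [conv_withDensity_eq_mlconvolution₀ hf.aemeasurable.ennreal_ofReal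
    hg.aemeasurable.ennreal_ofReal]
  refine withDensity_congr_ae ?_
  filter_upwards [hf.ae_convolution_exists (ContinuousLinearMap.lsmul ℝ ℝ) hg] with x hx
  rw [lconvolution_def, convolution_def, ofReal_integral_eq_lintegral_ofReal hx
    (ae_of_all _ fun t ↦ mul_nonneg (hf0 t) (hg0 (x - t)))]
  refine lintegral_congr fun t ↦ ?_
  rw [neg_add_eq_sub, ← ENNReal.ofReal_mul (hf0 t)]
  rfl

theorem integral_comp_mul_left_Iic {E : Type*} [NormedAddCommGroup E] [NormedSpace ℝ E]
    (g : ℝ → E) (a : ℝ) {b : ℝ} (hb : 0 < b) :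
    ∫ x in Set.Iic a, g (b * x) = b⁻¹ • ∫ x in Set.Iic (b * a), g x := by
  simpa [LinearOrderedField.smul_Iic hb] using
    Measure.setIntegral_comp_smul_of_pos volume g (Set.Iic a) hb

section LobachevskySpline

theorem lob_one_eq_indicator (a : ℝ) :
    lob a 1 = (Set.Icc (-a) a).indicator fun _ ↦ 1 / (2 * a) := by
  ext x
  simp [lob, Set.indicator_apply, abs_le]

variable {a : ℝ}

theorem lob_nonneg (ha : 0 ≤ a) : ∀ n, 0 ≤ lob a n
  | 0 => le_rfl
  | 1 => lob_one_eq_indicator a ▸ Set.indicator_nonneg fun _ _ ↦ by positivity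
  | n + 2 => fun x ↦ mul_nonneg (by positivity)
      (intervalIntegral.integral_nonneg (by linarith) fun t _ ↦ lob_nonneg ha (n + 1) t)

theorem lob_add_two_eq_convolution (ha : 0 ≤ a) (n : ℕ) :
    lob a (n + 2) = lob a 1 ⋆ lob a (n + 1) := by
  ext x
  calc lob a (n + 2) x
      = 1 / (2 * a) * ∫ t in (-a)..a, lob a (n + 1) (x - t) := by
        rw [intervalIntegral.integral_comp_sub_left, sub_neg_eq_add]
        rfl
    _ = ∫ t in Set.Icc (-a) a, 1 / (2 * a) * lob a (n + 1) (x - t) := by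
        rw [intervalIntegral.integral_of_le (by linarith), integral_Icc_eq_integral_Ioc,
          integral_const_mul]
    _ = (lob a 1 ⋆ lob a (n + 1)) x := by
        rw [convolution_def, lob_one_eq_indicator, ← integral_indicator measurableSet_Icc]
        congr 1 with t
        by_cases ht : t ∈ Set.Icc (-a) a <;> simp [ht]

theorem integrable_lob (ha : 0 ≤ a) : ∀ n, Integrable (lob a n)
  | 0 => integrable_zero _ _ _
  | 1 => lob_one_eq_indicator a ▸ (integrable_indicator_iff measurableSet_Icc).2
      (integrableOn_const isCompact_Icc.measure_ne_top)
  | n + 2 => lob_add_two_eq_convolution ha n ▸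
      (integrable_lob ha 1).integrable_convolution _ (integrable_lob ha (n + 1))

theorem withDensity_lob_one_eq_cond (ha : 0 < a) :
    (volume.withDensity fun x ↦ ENNReal.ofReal (lob a 1 x)) = volume[|Set.Icc (-a) a] := by
  have hdensity : (fun x ↦ ENNReal.ofReal (lob a 1 x)) =
      (Set.Icc (-a) a).indicator fun _ ↦ (volume (Set.Icc (-a) a))⁻¹ := by
    ext x
    by_cases hx : x ∈ Set.Icc (-a) a
    · simp [hx, lob_one_eq_indicator, ← ENNReal.ofReal_inv_of_pos, ha, two_mul]
    · simp [hx, lob_one_eq_indicator]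
  rw [hdensity, withDensity_indicator measurableSet_Icc, withDensity_const, ProbabilityTheory.cond]

theorem hasLaw_sum_range_succ_lob (ha : 0 < a) {Ω : Type*} {mΩ : MeasurableSpace Ω}
    {P : Measure Ω} {X : ℕ → Ω → ℝ}
    (hlaw : ∀ i, HasLaw (X i) (volume[|Set.Icc (-a) a]) P) (hindep : iIndepFun X P) (n : ℕ) :
    HasLaw (∑ k ∈ Finset.range (n + 1), X k)
      (volume.withDensity fun x ↦ ENNReal.ofReal (lob a (n + 1) x)) P := by
  induction n with
  | zero => simpa [withDensity_lob_one_eq_cond ha] using hlaw 0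
  | succ n ih =>
    have hstep := (hindep.indepFun_sum_range_succ₀
      (fun i ↦ (hlaw i).aemeasurable) (n + 1)).symm.hasLaw_add
      (withDensity_lob_one_eq_cond ha ▸ hlaw (n + 1)) ih
    rwa [conv_withDensity_ofReal (integrable_lob ha.le _) (integrable_lob ha.le _)
      (lob_nonneg ha.le _) (lob_nonneg ha.le _), ← lob_add_two_eq_convolution ha.le, add_comm,
      ← Finset.sum_range_succ] at hstep

theorem measureReal_sum_range_le_eq_setIntegral_lob (ha : 0 < a) {Ω : Type*}
    {mΩ : MeasurableSpace Ω} {P : Measure Ω} {X : ℕ → Ω → ℝ}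
    (hlaw : ∀ i, HasLaw (X i) (volume[|Set.Icc (-a) a]) P) (hindep : iIndepFun X P)
    {n : ℕ} (hn : n ≠ 0) (y : ℝ) :
    P.real {ω | ∑ k ∈ Finset.range n, X k ω ≤ y} = ∫ t in Set.Iic y, lob a n t := by
  obtain ⟨m, rfl⟩ := Nat.exists_eq_add_one_of_ne_zero hn
  rw [← measureReal_withDensity_ofReal (integrable_lob ha.le _).aestronglyMeasurable
    (lob_nonneg ha.le _) measurableSet_Iic]
  simpa only [Finset.sum_apply, Set.Iic_def] using
    (hasLaw_sum_range_succ_lob ha hlaw hindep m).measureReal_eq measurableSet_Iic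

theorem setIntegral_Iic_lobStar (ha : 0 < a) {n : ℕ} (hn : n ≠ 0) (x : ℝ) :
    ∫ t in Set.Iic x, lobStar a n t = ∫ t in Set.Iic (a * √(n / 3) * x), lob a n t := by
  have hscale : 0 < a * √(n / 3) := by positivity
  simp only [lobStar]
  rw [integral_const_mul, integral_comp_mul_left_Iic _ _ hscale, smul_eq_mul,
    mul_inv_cancel_left₀ hscale.ne']

end LobachevskySpline

theorem lobStar_cdf_tendsto_normal_cdf (a : ℝ) (ha : 0 < a) (x : ℝ) :
    Tendsto (fun n => ∫ t in Set.Iic x, lobStar a n t) atTop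
      (nhds (∫ t in Set.Iic x, stdNormal t)) := by
  have hprob : IsProbabilityMeasure (volume[|Set.Icc (-a) a]) :=
    cond_isProbabilityMeasure_of_finite (by simpa using ha) (by simp)
  obtain ⟨Ω, _, P, X, -, hlaw, hindep, _⟩ := exists_iid ℕ (volume[|Set.Icc (-a) a])
  have hmean : P[X 0] = 0 := by
    rw [(hlaw 0).integral_eq, integral_id_cond_Icc (neg_lt_self ha), neg_add_cancel, zero_div]
  have hvar : Var[X 0; P] = a ^ 2 / 3 := by
    rw [(hlaw 0).variance_eq, variance_id_cond_Icc (neg_lt_self ha)]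
    ring
  have hscale (n : ℕ) : √(n * (a ^ 2 / 3)) = a * √(n / 3) := by
    rw [mul_div_left_comm, Real.sqrt_mul (sq_nonneg a), Real.sqrt_sq ha.le]
  have hclt := tendsto_measureReal_sum_range_le_of_iIndepFun hindep
    (fun i ↦ (hlaw i).identDistrib (hlaw 0)) (by rw [hvar]; positivity) x
  simp only [hmean, hvar, hscale, mul_zero, sub_zero] at hclt
  refine hclt.congr' ?_
  filter_upwards [eventually_ne_atTop 0] with n hn
  rw [measureReal_sum_range_le_eq_setIntegral_lob ha hlaw hindep hn, setIntegral_Iic_lobStar ha hn]
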